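/- arXiv:2106.00807 — 18 statements merged into one kernel-verified Lean document; each statement's English description precedes it below -/
import Mathlib

section
/- Let A be a distributive nearlattice and let a₁, …, aₙ (n ≥ 1) be dual atoms of A such that the set {a₁, …, aₙ} has a greatest lower bound a* in A. Then a* is a boolean element of A, i.e., the principal upset [a*) is a boolean lattice. -/
/-- In a join-semilattice, any two elements with a common lower bound have a
greatest lower bound. -/
def HasPartialMeets (A : Type*) [SemilatticeSup A] : Prop :=
  ∀ x y : A, (∃ z, z ≤ x ∧ z ≤ y) → ∃ m, IsGLB ({x, y} : Set A) m

/-- Every principal upset is distributive: for all `a ≤ x, y, z`,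
`x ∧ (y ∨ z) = (x ∧ y) ∨ (x ∧ z)` (meets expressed via `IsGLB`). -/
def UpsetDistrib (A : Type*) [SemilatticeSup A] : Prop :=
  ∀ a x y z m₁ m₂ m₃ : A, a ≤ x → a ≤ y → a ≤ z →
    IsGLB ({x, y ⊔ z} : Set A) m₁ → IsGLB ({x, y} : Set A) m₂ →
    IsGLB ({x, z} : Set A) m₃ → m₁ = m₂ ⊔ m₃

/-- A dual atom: `a ≠ 1` and `a ≤ x ≤ 1` implies `x = a` or `x = 1`. -/
def DualAtom {A : Type*} [SemilatticeSup A] [OrderTop A] (a : A) : Prop :=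
  a ≠ ⊤ ∧ ∀ x, a ≤ x → x = a ∨ x = ⊤

/-- A boolean element: the principal upset `[a)` is a boolean lattice, i.e. every
`x ≥ a` has a complement `y ≥ a` with `x ∨ y = 1` and `x ∧ y = a`. -/
def BooleanElt {A : Type*} [SemilatticeSup A] [OrderTop A] (a : A) : Prop :=
  ∀ x, a ≤ x → ∃ y, a ≤ y ∧ x ⊔ y = ⊤ ∧ IsGLB ({x, y} : Set A) a

/-- if finitely many (at least one) dual atoms of a distributive
nearlattice have a greatest lower bound `a*`, then `a*` is a boolean element. -/
theorem meet_of_dual_atoms_is_boolean {A : Type*} [SemilatticeSup A] [OrderTop A]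
    (hm : HasPartialMeets A) (hd : UpsetDistrib A)
    (S : Finset A) (hS : S.Nonempty) (hat : ∀ x ∈ S, DualAtom x)
    (aStar : A) (hglb : IsGLB (S : Set A) aStar) :
    BooleanElt aStar := by
  classical
  intro x hx
  have key : ∀ T : Finset A, (∀ t ∈ T, aStar ≤ t ∧ x ⊔ t = ⊤) →
      ∃ y, aStar ≤ y ∧ (∀ t ∈ T, y ≤ t) ∧ x ⊔ y = ⊤ := by
    intro T
    induction T using Finset.induction_on with
    | empty => intro _; exact ⟨⊤, le_top, by simp, by simp⟩
    | insert t T _ ih =>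
      intro h
      obtain ⟨y, hy, hyT, hxy⟩ := ih (fun u hu => h u (Finset.mem_insert_of_mem hu))
      obtain ⟨hat', hxt⟩ := h t (Finset.mem_insert_self _ _)
      obtain ⟨m, hmg⟩ := hm y t ⟨aStar, hy, hat'⟩
      obtain ⟨k, hk⟩ := hm y x ⟨aStar, hy, hx⟩
      have h1 : IsGLB ({y, x ⊔ t} : Set A) y := by
        rw [hxt]
        refine ⟨?_, fun b hb => hb (by simp)⟩
        intro b hb
        rcases hb with rfl | rfl
        · exact le_rfl
        · exact le_top
      have e := hd aStar y x t y k m hy hx hat' h1 hk hmg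
      have hkx : k ≤ x := hk.1 (by simp)
      have hmy : m ≤ y := hmg.1 (by simp)
      have hmt : m ≤ t := hmg.1 (by simp)
      refine ⟨m, hmg.2 ?_, ?_, ?_⟩
      · intro b hb
        rcases hb with rfl | rfl
        · exact hy
        · exact hat'
      · intro u hu
        rcases Finset.mem_insert.1 hu with rfl | hu
        · exact hmt
        · exact hmy.trans (hyT u hu)
      · apply top_le_iff.1
        rw [← hxy]
        refine sup_le le_sup_left ?_
        rw [e]
        exact sup_le_sup_right hkx m
  obtain ⟨y, hy, hyT, hxy⟩ := key (S.filter (fun s => ¬ x ≤ s)) (by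
    intro t ht
    obtain ⟨htS, hxt⟩ := Finset.mem_filter.1 ht
    refine ⟨hglb.1 htS, ?_⟩
    rcases (hat t htS).2 (x ⊔ t) le_sup_right with h | h
    · exact absurd (sup_eq_right.1 h) hxt
    · exact h)
  refine ⟨y, hy, hxy, ?_, ?_⟩
  · intro b hb
    rcases hb with rfl | rfl
    · exact hx
    · exact hy
  · intro b hb
    have hbx : b ≤ x := hb (by simp)
    have hby : b ≤ y := hb (by simp)
    refine hglb.2 ?_
    intro s hs
    by_cases hxs : x ≤ s
    · exact hbx.trans hxs
    · exact hby.trans (hyT s (Finset.mem_filter.2 ⟨hs, hxs⟩))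
end

section
/- Let A be a distributive nearlattice and a, b ∈ A. Then X_{a∨b} = X_a ∩ X_b. Moreover, if the meet a ∧ b exists in A, then X_{a∧b} = X_a ∪ X_b. -/
/-- `X_a`: the set of dual atoms above `a`. -/
def Xset {A : Type*} [SemilatticeSup A] [OrderTop A] (a : A) : Set A :=
  {x | DualAtom x ∧ a ≤ x}

/-- `X_{a∨b} = X_a ∩ X_b`, and if `a ∧ b` exists then
`X_{a∧b} = X_a ∪ X_b`. -/
theorem Xset_sup_and_inf {A : Type*} [SemilatticeSup A] [OrderTop A]
    (hm : HasPartialMeets A) (hd : UpsetDistrib A) (a b : A) :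
    Xset (a ⊔ b) = Xset a ∩ Xset b ∧
      ∀ m : A, IsGLB ({a, b} : Set A) m → Xset m = Xset a ∪ Xset b := by
  refine ⟨?_, ?_⟩
  · ext x
    simp only [Xset, Set.mem_setOf_eq, Set.mem_inter_iff, sup_le_iff]
    tauto
  · intro m hmab
    have hma : m ≤ a := hmab.1 (by simp)
    have hmb : m ≤ b := hmab.1 (by simp)
    ext x
    constructor
    · rintro ⟨hx, hmx⟩
      rcases hx.2 (x ⊔ b) le_sup_left with h | h
      · exact Or.inr ⟨hx, sup_eq_left.mp h⟩
      · left
        refine ⟨hx, ?_⟩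
        obtain ⟨n, hn⟩ := hm a x ⟨m, hma, hmx⟩
        have hna : n ≤ a := hn.1 (by simp)
        have hnx : n ≤ x := hn.1 (by simp)
        have h1 : IsGLB ({a, x ⊔ b} : Set A) a := by
          rw [h]
          refine ⟨?_, fun y hy => hy (by simp)⟩
          rintro y (rfl | rfl)
          · exact le_rfl
          · exact le_top
        have h2 := hd m a x b a n m hma hmx hmb h1 hn hmab
        rw [h2]
        exact sup_le hnx hmx
    · rintro (⟨hx, h⟩ | ⟨hx, h⟩)
      · exact ⟨hx, hma.trans h⟩
      · exact ⟨hx, hmb.trans h⟩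
end

section
/- Let A be a finite distributive nearlattice. Then the set B(A) of boolean elements is a nearlattice subalgebra of A: 1 ∈ B(A); if a, b ∈ B(A) then a ∨ b ∈ B(A); and if a, b ∈ B(A) and the meet a ∧ b exists in A, then a ∧ b ∈ B(A). -/
/-- in a finite distributive nearlattice, the boolean elements form
a nearlattice subalgebra: they contain `1`, are closed under `∨`, and closed
under existing meets. -/
theorem boolean_elements_subalgebra {A : Type*} [SemilatticeSup A] [OrderTop A]
    [Finite A] (hm : HasPartialMeets A) (hd : UpsetDistrib A) :
    BooleanElt (⊤ : A) ∧
      (∀ a b : A, BooleanElt a → BooleanElt b → BooleanElt (a ⊔ b)) ∧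
      (∀ a b m : A, BooleanElt a → BooleanElt b →
        IsGLB ({a, b} : Set A) m → BooleanElt m) := by
  have key : ∀ {x y m : A}, m ≤ x → m ≤ y → (∀ z, z ≤ x → z ≤ y → z ≤ m) →
      IsGLB ({x, y} : Set A) m := by
    intro x y m h1 h2 h3
    refine ⟨?_, ?_⟩
    · rintro z (rfl | rfl)
      · exact h1
      · exact h2
    · intro z hz
      exact h3 z (hz (by simp)) (hz (by simp))
  have gl : ∀ {x y m : A}, IsGLB ({x, y} : Set A) m →
      m ≤ x ∧ m ≤ y ∧ (∀ z, z ≤ x → z ≤ y → z ≤ m) := by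
    intro x y m h
    refine ⟨h.1 (by simp), h.1 (by simp), fun z h1 h2 => h.2 ?_⟩
    rintro w (rfl | rfl)
    · exact h1
    · exact h2
  refine ⟨?_, ?_, ?_⟩
  · intro x hx
    exact ⟨⊤, le_rfl, by simp, key hx le_rfl (fun z _ h => h)⟩
  · intro a b ha _ x hx
    obtain ⟨y, hay, hxy, hg⟩ := ha x (le_sup_left.trans hx)
    refine ⟨y ⊔ (a ⊔ b), le_sup_right, by rw [← sup_assoc, hxy, top_sup_eq], ?_⟩
    obtain ⟨m, hmm⟩ := hm x (y ⊔ (a ⊔ b)) ⟨a ⊔ b, hx, le_sup_right⟩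
    have h := hd a x y (a ⊔ b) m a (a ⊔ b) (le_sup_left.trans hx) hay le_sup_left hmm hg
      (key hx le_rfl (fun z _ h => h))
    rw [sup_eq_right.2 le_sup_left] at h
    exact h ▸ hmm
  · intro a b m ha hb hab x hx
    obtain ⟨hma, hmb, hmg⟩ := gl hab
    obtain ⟨p, hap, hxp, hp⟩ := ha (x ⊔ a) le_sup_right
    obtain ⟨q, hbq, hxq, hq⟩ := hb (x ⊔ b) le_sup_right
    rw [sup_assoc, sup_eq_right.2 hap] at hxp
    rw [sup_assoc, sup_eq_right.2 hbq] at hxq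
    have hmp := hma.trans hap
    have hmq := hmb.trans hbq
    obtain ⟨y, hy⟩ := hm p q ⟨m, hmp, hmq⟩
    obtain ⟨hyp, hyq, hyg⟩ := gl hy
    have hmy := hyg m hmp hmq
    obtain ⟨r, hr⟩ := hm p x ⟨m, hmp, hx⟩
    have h := hd m p x q p r y hmp hx hmq
      (key le_rfl (by rw [hxq]; exact le_top) (fun z h _ => h)) hr hy
    refine ⟨y, hmy, ?_, key hx hmy ?_⟩
    · rw [eq_top_iff, ← hxp, h]
      exact sup_le le_sup_left (sup_le ((gl hr).2.1.trans le_sup_left) le_sup_right)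
    · intro z hzx hzy
      exact hmg z ((gl hp).2.2 z (hzx.trans le_sup_left) (hzy.trans hyp))
        ((gl hq).2.2 z (hzx.trans le_sup_left) (hzy.trans hyq))
end

section
/- Let A be a finite distributive nearlattice, let a be a boolean element of A and let b ∈ A with a ≤ b. Then b is a boolean element of A; that is, B(A) is an upset of A and [a) ∩ B(A) = [a). -/
/-- in a finite distributive nearlattice, everything above a
boolean element is boolean (the set of boolean elements is an upset). -/
theorem boolean_elements_upset {A : Type*} [SemilatticeSup A] [OrderTop A]
    [Finite A] (hm : HasPartialMeets A) (hd : UpsetDistrib A)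
    (a b : A) (ha : BooleanElt a) (hab : a ≤ b) :
    BooleanElt b := by
  intro x hx
  obtain ⟨y, hay, hxy, hg⟩ := ha x (hab.trans hx)
  obtain ⟨m, hmm⟩ := hm x (y ⊔ b) ⟨b, hx, le_sup_right⟩
  have hb : IsGLB ({x, b} : Set A) b := by
    constructor
    · intro z hz
      rcases hz with rfl | rfl
      · exact hx
      · exact le_rfl
    · intro z hz
      exact hz (Or.inr rfl)
  have h := hd a x y b m a b (hab.trans hx) hay hab hmm hg hb
  rw [sup_eq_right.mpr hab] at h
  subst h
  exact ⟨y ⊔ m, le_sup_right, by rw [← sup_assoc, hxy, top_sup_eq], hmm⟩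
end

section
/- Let A be a finite distributive nearlattice. The following are equivalent: (1) the set At(A) of dual atoms has a greatest lower bound in A; (2) there exists a ∈ A such that B(A) = [a); (3) B(A) has a least element c and every b ∈ B(A) has a complement relative to c inside B(A), i.e., some b' ∈ B(A) with b ∨ b' = 1 and b ∧ b' = c (so B(A) is a boolean lattice). -/
theorem glb_pair_le {A : Type*} [SemilatticeSup A] {x y m : A} (h : IsGLB ({x, y} : Set A) m) :
    m ≤ x ∧ m ≤ y ∧ ∀ z, z ≤ x → z ≤ y → z ≤ m := by
  refine ⟨h.1 (by simp), h.1 (by simp), fun z h1 h2 => h.2 ?_⟩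
  intro w hw
  rcases hw with rfl | rfl
  · exact h1
  · exact h2

theorem glb_pair_mk {A : Type*} [SemilatticeSup A] {x y m : A} (h1 : m ≤ x) (h2 : m ≤ y)
    (h : ∀ z, z ≤ x → z ≤ y → z ≤ m) : IsGLB ({x, y} : Set A) m := by
  constructor
  · intro w hw
    rcases hw with rfl | rfl
    · exact h1
    · exact h2
  · intro z hz
    exact h z (hz (by simp)) (hz (by simp))

theorem exists_dualAtom {A : Type*} [SemilatticeSup A] [OrderTop A] [Finite A] (y : A)
    (hy : y ≠ ⊤) : ∃ d, DualAtom d ∧ y ≤ d := by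
  obtain ⟨d, hyd, hd⟩ := (Set.toFinite {z : A | z ≠ ⊤}).exists_le_maximal hy
  refine ⟨d, ⟨hd.1, fun x hx => ?_⟩, hyd⟩
  by_cases h : x = ⊤
  · exact Or.inr h
  · exact Or.inl (le_antisymm (hd.2 h hx) hx)

theorem boolean_le_of_lower {A : Type*} [SemilatticeSup A] [OrderTop A] [Finite A] {b z : A}
    (hb : BooleanElt b) (hz : ∀ d, DualAtom d → b ≤ d → z ≤ d) : z ≤ b := by
  obtain ⟨y, hby, hxy, hg⟩ := hb (z ⊔ b) le_sup_right
  obtain ⟨-, -, h⟩ := glb_pair_le hg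
  by_cases hy : y = ⊤
  · exact h z le_sup_left (hy ▸ le_top)
  · obtain ⟨d, hd, hyd⟩ := exists_dualAtom y hy
    exfalso
    apply hd.1
    have hbd := hby.trans hyd
    rw [eq_top_iff, ← hxy]
    exact sup_le (sup_le (hz d hd hbd) hbd) hyd

theorem dualAtom_boolean {A : Type*} [SemilatticeSup A] [OrderTop A] {d : A}
    (hd : DualAtom d) : BooleanElt d := by
  intro x hx
  rcases hd.2 x hx with rfl | rfl
  · exact ⟨⊤, le_top, by simp, glb_pair_mk le_rfl le_top (fun z h _ => h)⟩
  · exact ⟨d, le_rfl, by simp, glb_pair_mk le_top le_rfl (fun z _ h => h)⟩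

theorem boolean_up {A : Type*} [SemilatticeSup A] [OrderTop A] (hm : HasPartialMeets A)
    (hd : UpsetDistrib A) {a b : A} (ha : BooleanElt a) (hab : a ≤ b) : BooleanElt b := by
  intro x hx
  obtain ⟨y, hay, hxy, hg⟩ := ha x (hab.trans hx)
  refine ⟨y ⊔ b, le_sup_right, by rw [← sup_assoc, hxy]; simp, ?_⟩
  obtain ⟨m, hmm⟩ := hm x (y ⊔ b) ⟨b, hx, le_sup_right⟩
  have := hd a x y b m a b (hab.trans hx) hay hab hmm hg
    (glb_pair_mk hx le_rfl (fun z _ h => h))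
  rw [sup_eq_right.2 hab] at this
  exact this ▸ hmm

theorem glb_boolean {A : Type*} [SemilatticeSup A] [OrderTop A] [Finite A]
    (hm : HasPartialMeets A) (hd : UpsetDistrib A) {c : A}
    (hc : IsGLB {x : A | DualAtom x} c) : BooleanElt c := by
  intro x hx
  obtain ⟨y, -, hy⟩ := (Set.toFinite {y : A | c ≤ y ∧ x ⊔ y = ⊤}).exists_le_minimal
    (show (⊤ : A) ∈ _ from ⟨le_top, by simp⟩)
  obtain ⟨⟨hcy, hxy⟩, hmin⟩ := hy
  refine ⟨y, hcy, hxy, glb_pair_mk hx hcy (fun z hzx hzy => hc.2 ?_)⟩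
  intro d hdd
  have hcd : c ≤ d := hc.1 hdd
  rcases hdd.2 (x ⊔ d) le_sup_right with h | hxd
  · exact hzx.trans (sup_eq_right.1 h)
  obtain ⟨p, hp⟩ := hm d y ⟨c, hcd, hcy⟩
  obtain ⟨hp1, hp2, hp3⟩ := glb_pair_le hp
  have hcp := hp3 c hcd hcy
  obtain ⟨q, hq⟩ := hm d (x ⊔ p) ⟨c, hcd, hx.trans le_sup_left⟩
  obtain ⟨hq1, hq2, hq3⟩ := glb_pair_le hq
  have htop : (x ⊔ p) ⊔ y = ⊤ := by
    rw [eq_top_iff, ← hxy]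
    exact sup_le (le_sup_left.trans le_sup_left) le_sup_right
  have e := hd c d (x ⊔ p) y d q p hcd (hx.trans le_sup_left) hcy
    (by rw [htop]; exact glb_pair_mk le_rfl le_top (fun z h _ => h)) hq hp
  have hdw : d ≤ x ⊔ p := by
    rw [e]
    exact sup_le hq2 le_sup_right
  have hxp : x ⊔ p = ⊤ := by
    rw [eq_top_iff, ← hxd]
    exact sup_le le_sup_left hdw
  exact hzy.trans ((hmin ⟨hcp, hxp⟩ hp2).trans hp1)

/-- in a finite distributive nearlattice the following are
equivalent: (1) the set of dual atoms has a greatest lower bound; (2) the set of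
boolean elements is a principal upset `[a)`; (3) the boolean elements form a
boolean lattice (least element `c` and complements relative to `c`). -/
theorem boolean_elements_boolean_lattice_iff {A : Type*} [SemilatticeSup A]
    [OrderTop A] [Finite A] (hm : HasPartialMeets A) (hd : UpsetDistrib A) :
    ((∃ c : A, IsGLB {x : A | DualAtom x} c) ↔
        (∃ a : A, {b : A | BooleanElt b} = Set.Ici a)) ∧
    ((∃ a : A, {b : A | BooleanElt b} = Set.Ici a) ↔
        (∃ c : A, BooleanElt c ∧ (∀ b, BooleanElt b → c ≤ b) ∧
          ∀ b, BooleanElt b →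
            ∃ b', BooleanElt b' ∧ b ⊔ b' = ⊤ ∧ IsGLB ({b, b'} : Set A) c)) := by
  refine ⟨⟨?_, ?_⟩, ?_, ?_⟩
  · rintro ⟨c, hc⟩
    refine ⟨c, Set.ext fun b => ⟨fun hb => ?_, fun hb => ?_⟩⟩
    · exact boolean_le_of_lower hb (fun d hd _ => hc.1 hd)
    · exact boolean_up hm hd (glb_boolean hm hd hc) hb
  · rintro ⟨a, ha⟩
    have hab : BooleanElt a := (Set.ext_iff.1 ha a).2 (Set.mem_Ici.2 le_rfl)
    refine ⟨a, fun d hd' => (Set.ext_iff.1 ha d).1 (dualAtom_boolean hd'), fun z hz => ?_⟩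
    exact boolean_le_of_lower hab (fun d hd _ => hz hd)
  · rintro ⟨a, ha⟩
    have hab : BooleanElt a := (Set.ext_iff.1 ha a).2 (Set.mem_Ici.2 le_rfl)
    refine ⟨a, hab, fun b hb => (Set.ext_iff.1 ha b).1 hb, fun b hb => ?_⟩
    obtain ⟨y, h1, h2, h3⟩ := hab b ((Set.ext_iff.1 ha b).1 hb)
    exact ⟨y, boolean_up hm hd hab h1, h2, h3⟩
  · rintro ⟨c, hc, hl, -⟩
    exact ⟨c, Set.ext fun b => ⟨fun hb => hl b hb, fun hb => boolean_up hm hd hc hb⟩⟩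
end

section
/- Let A be a finite distributive nearlattice. The following are equivalent: (1) the set At(A) of dual atoms has a greatest lower bound in A; (2) there exists a ∈ A such that D(A) = (a], the principal downset of a; (3) D(A) ≠ ∅. -/
/-- `a^⊤ = {x : a ∨ x = 1}`. -/
def topOf {A : Type*} [SemilatticeSup A] [OrderTop A] (a : A) : Set A :=
  {x | a ⊔ x = ⊤}

/-- `a` is dense if `a^⊤ = {1}`. -/
def DenseElt {A : Type*} [SemilatticeSup A] [OrderTop A] (a : A) : Prop :=
  topOf a = {⊤}

theorem denseElt_iff_mem {A : Type*} [SemilatticeSup A] [OrderTop A] [Finite A] (b : A) :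
    DenseElt b ↔ b ∈ lowerBounds {x : A | DualAtom x} := by
  have key : DenseElt b ↔ ∀ x, b ⊔ x = ⊤ → x = ⊤ := by
    unfold DenseElt topOf
    constructor
    · intro h x hx
      have : x ∈ ({⊤} : Set A) := h ▸ hx
      simpa using this
    · intro h
      ext x
      simp only [Set.mem_setOf_eq, Set.mem_singleton_iff]
      exact ⟨h x, fun hx => by simp [hx]⟩
  rw [key]
  constructor
  · intro h d hd
    rcases hd.2 (b ⊔ d) le_sup_right with h1 | h1
    · exact sup_eq_right.mp h1
    · exact absurd (h d h1) hd.1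
  · intro h x hx
    by_contra hne
    obtain ⟨d, hxd, hd⟩ := (Set.toFinite {y : A | y ≠ ⊤}).exists_le_maximal hne
    have hda : DualAtom d := by
      refine ⟨hd.prop, fun y hy => ?_⟩
      by_cases hyt : y = ⊤
      · exact Or.inr hyt
      · exact Or.inl (le_antisymm (hd.2 hyt hy) hy)
    have h2 : b ⊔ x ≤ d := sup_le (h hda) hxd
    rw [hx] at h2
    exact hd.prop (top_le_iff.mp h2)

/-- in a finite distributive nearlattice the following are
equivalent: (1) the dual atoms have a greatest lower bound; (2) the dense
elements form a principal downset `(a]`; (3) there is a dense element. -/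
theorem dense_elements_iff {A : Type*} [SemilatticeSup A] [OrderTop A] [Finite A]
    (hm : HasPartialMeets A) (hd : UpsetDistrib A) :
    ((∃ c : A, IsGLB {x : A | DualAtom x} c) ↔
        (∃ a : A, {b : A | DenseElt b} = Set.Iic a)) ∧
    ((∃ a : A, {b : A | DenseElt b} = Set.Iic a) ↔ (∃ b : A, DenseElt b)) := by
  have hD : {b : A | DenseElt b} = lowerBounds {x : A | DualAtom x} :=
    Set.ext fun b => denseElt_iff_mem b
  have h12 : ∀ c : A, IsGLB {x : A | DualAtom x} c → {b : A | DenseElt b} = Set.Iic c := by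
    intro c hc
    rw [hD]
    ext b
    exact ⟨fun hb => hc.2 hb, fun hb x hx => le_trans hb (hc.1 hx)⟩
  have h31 : (∃ b : A, DenseElt b) → ∃ c : A, IsGLB {x : A | DualAtom x} c := by
    rintro ⟨b, hb⟩
    rw [denseElt_iff_mem] at hb
    obtain ⟨c, -, hc⟩ :=
      (Set.toFinite (lowerBounds {x : A | DualAtom x})).exists_le_maximal hb
    refine ⟨c, hc.prop, fun y hy => ?_⟩
    have h1 : c ⊔ y ∈ lowerBounds {x : A | DualAtom x} :=
      fun x hx => sup_le (hc.prop hx) (hy hx)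
    exact le_trans le_sup_right (hc.2 h1 le_sup_left)
  have h23 : (∃ a : A, {b : A | DenseElt b} = Set.Iic a) → ∃ b : A, DenseElt b := by
    rintro ⟨a, ha⟩
    have : a ∈ {b : A | DenseElt b} := by rw [ha]; exact Set.mem_Iic.mpr le_rfl
    exact ⟨a, this⟩
  have h12' : (∃ c : A, IsGLB {x : A | DualAtom x} c) →
      ∃ a : A, {b : A | DenseElt b} = Set.Iic a := fun ⟨c, hc⟩ => ⟨c, h12 c hc⟩
  exact ⟨⟨h12', fun h => h31 (h23 h)⟩, ⟨h23, fun h => h12' (h31 h)⟩⟩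
end

section
/- Let A be a finite distributive nearlattice. (1) For all boolean elements a, b ∈ B(A): a ≤ b if and only if a^⊤ ⊆ b^⊤. (2) For every a ∈ A, the set X_a has a greatest lower bound b = ⋀X_a in A (interpreting ⋀∅ = 1), and a^⊤ = b^⊤. -/
/-- in a finite distributive nearlattice: (1) for boolean `a, b`,
`a ≤ b` iff `a^⊤ ⊆ b^⊤`; (2) for every `a`, the set `X_a` has a greatest lower
bound `b` and `a^⊤ = b^⊤`. -/
theorem annihilator_properties {A : Type*} [SemilatticeSup A] [OrderTop A]
    [Finite A] (hm : HasPartialMeets A) (hd : UpsetDistrib A) :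
    (∀ a b : A, BooleanElt a → BooleanElt b → (a ≤ b ↔ topOf a ⊆ topOf b)) ∧
      (∀ a : A, ∃ b : A, IsGLB (Xset a) b ∧ topOf a = topOf b) := by
  refine ⟨?_, ?_⟩
  · intro a b _ hb
    constructor
    · intro hab x hx
      have hx' : a ⊔ x = ⊤ := hx
      show b ⊔ x = ⊤
      exact top_le_iff.mp (hx' ▸ sup_le_sup_right hab x)
    · intro h
      obtain ⟨y, hby, hy, hg⟩ := hb (a ⊔ b) le_sup_right
      have h1 : y ∈ topOf a := by
        show a ⊔ y = ⊤
        rwa [sup_assoc, sup_eq_right.mpr hby] at hy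
      have h2 : b ⊔ y = ⊤ := h h1
      rw [sup_eq_right.mpr hby] at h2
      subst h2
      have h3 : a ⊔ b ≤ b := hg.2 (by
        intro z hz
        rcases hz with rfl | hz
        · exact le_rfl
        · rw [Set.mem_singleton_iff.mp hz]
          exact le_top)
      exact le_sup_left.trans h3
  · intro a
    have hfin : (lowerBounds (Xset a)).Finite := Set.toFinite _
    have ha : a ∈ lowerBounds (Xset a) := fun x hx => hx.2
    have hne : hfin.toFinset.Nonempty := ⟨a, hfin.mem_toFinset.mpr ha⟩
    have hb : IsGLB (Xset a) (hfin.toFinset.sup' hne id) := by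
      constructor
      · intro x hx
        exact Finset.sup'_le _ _ fun z hz => (hfin.mem_toFinset.mp hz) hx
      · intro z hz
        exact Finset.le_sup' id (hfin.mem_toFinset.mpr hz)
    generalize hfin.toFinset.sup' hne id = b at hb
    refine ⟨b, hb, ?_⟩
    ext x
    show a ⊔ x = ⊤ ↔ b ⊔ x = ⊤
    constructor
    · intro h
      exact top_le_iff.mp (h ▸ sup_le_sup_right (hb.2 ha) x)
    · intro h
      rcases eq_top_or_exists_le_coatom (a ⊔ x) with h1 | ⟨c, hc, hac⟩
      · exact h1
      · exfalso
        have hcX : c ∈ Xset a := by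
          refine ⟨⟨hc.1, fun y hy => ?_⟩, le_sup_left.trans hac⟩
          rcases hy.eq_or_lt with h2 | h2
          · exact Or.inl h2.symm
          · exact Or.inr (hc.2 y h2)
        exact hc.1 (top_le_iff.mp (h ▸ sup_le (hb.1 hcX) (le_sup_right.trans hac)))
end

section
/- Let A be a finite distributive nearlattice. For a ∈ A let π(a) := ⋀X_a, the greatest lower bound of X_a in A (this meet exists and π(a) is a boolean element; interpret ⋀∅ = 1). Then π : A → B(A) is a surjective N-homomorphism: π(1) = 1; π(a ∨ b) = π(a) ∨ π(b) for all a, b ∈ A; π(a ∧ b) = π(a) ∧ π(b) whenever a ∧ b exists in A; and π(b) = b for every b ∈ B(A), so every boolean element lies in the image of π. -/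
theorem glb_bin {A : Type*} [SemilatticeSup A] (hm : HasPartialMeets A) (hd : UpsetDistrib A)
    {s t m c p : A} (h : IsGLB ({s, t} : Set A) m) (hs : p ≤ c ⊔ s) (ht : p ≤ c ⊔ t) :
    p ≤ c ⊔ m := by
  have hms : m ≤ s := h.1 (by simp)
  have hmt : m ≤ t := h.1 (by simp)
  obtain ⟨e, he⟩ : ∃ e, e = c ⊔ m := ⟨_, rfl⟩
  have hme : m ≤ e := he ▸ le_sup_right
  have hce : c ≤ e := he ▸ le_sup_left
  rw [← he]
  obtain ⟨m₁, h₁⟩ := hm (e ⊔ s) (e ⊔ t) ⟨m, le_sup_of_le_left hme, le_sup_of_le_left hme⟩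
  obtain ⟨m₂, h₂⟩ := hm (e ⊔ s) e ⟨m, le_sup_of_le_left hme, hme⟩
  obtain ⟨m₃, h₃⟩ := hm (e ⊔ s) t ⟨m, le_sup_of_le_left hme, hmt⟩
  obtain ⟨m₄, h₄⟩ := hm t e ⟨m, hmt, hme⟩
  have e1 := hd m (e ⊔ s) e t m₁ m₂ m₃ (le_sup_of_le_left hme) hme hmt h₁ h₂ h₃
  have e2 := hd m t e s m₃ m₄ m hmt hme hms (by rwa [Set.pair_comm]) h₄ (by rwa [Set.pair_comm])
  have a1 : p ≤ m₁ := h₁.2 (by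
    rintro x (rfl | rfl)
    · exact hs.trans (sup_le_sup_right hce _)
    · exact ht.trans (sup_le_sup_right hce _))
  have a2 : m₂ ≤ e := h₂.1 (by simp)
  have a4 : m₄ ≤ e := h₄.1 (by simp)
  rw [e1, e2] at a1
  exact a1.trans (sup_le a2 (sup_le a4 hme))

theorem glb_fin {A : Type*} [SemilatticeSup A] [OrderTop A] (hm : HasPartialMeets A)
    (hd : UpsetDistrib A) (a : A) (S : Set A) (hS : S.Finite) :
    (∀ s ∈ S, a ≤ s) →
    ∃ m, IsGLB S m ∧ ∀ c p : A, (∀ s ∈ S, p ≤ c ⊔ s) → p ≤ c ⊔ m := by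
  induction S, hS using Set.Finite.induction_on with
  | empty => exact fun _ => ⟨⊤, by simp, by simp⟩
  | @insert s S _ _ ih =>
    intro h
    obtain ⟨m, hg, hc⟩ := ih (fun x hx => h x (Or.inr hx))
    obtain ⟨n, hn⟩ := hm s m ⟨a, h s (Or.inl rfl), hg.2 fun x hx => h x (Or.inr hx)⟩
    refine ⟨n, ⟨?_, ?_⟩, fun c p hp => ?_⟩
    · rintro x (rfl | hx)
      · exact hn.1 (by simp)
      · exact (hn.1 (by simp : m ∈ _)).trans (hg.1 hx)
    · intro z hz
      refine hn.2 ?_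
      rintro x (rfl | rfl)
      · exact hz (Or.inl rfl)
      · exact hg.2 fun y hy => hz (Or.inr hy)
    · exact glb_bin hm hd hn (hp s (Or.inl rfl)) (hc c p fun x hx => hp x (Or.inr hx))

/-- in a finite distributive nearlattice, `π(a) = ⋀X_a` is well
defined, and any such map `π` is a surjective N-homomorphism onto the boolean
elements: `π(1) = 1`, `π(a ∨ b) = π(a) ∨ π(b)`, `π(a ∧ b) = π(a) ∧ π(b)`
whenever `a ∧ b` exists, every `π(a)` is boolean, and `π` fixes (hence is onto)
the boolean elements. -/
theorem pi_is_onto_N_homomorphism {A : Type*} [SemilatticeSup A] [OrderTop A]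
    [Finite A] (hm : HasPartialMeets A) (hd : UpsetDistrib A) :
    (∀ a : A, ∃ b : A, IsGLB (Xset a) b) ∧
      ∀ π : A → A, (∀ a : A, IsGLB (Xset a) (π a)) →
        (π ⊤ = ⊤ ∧
          (∀ a b : A, π (a ⊔ b) = π a ⊔ π b) ∧
          (∀ a b m : A, IsGLB ({a, b} : Set A) m →
            IsGLB ({π a, π b} : Set A) (π m)) ∧
          (∀ a : A, BooleanElt (π a)) ∧
          (∀ b : A, BooleanElt b → π b = b)) := by
  have K : ∀ (a : A) (S : Set A), (∀ s ∈ S, a ≤ s) →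
      ∃ m, IsGLB S m ∧ ∀ c p : A, (∀ s ∈ S, p ≤ c ⊔ s) → p ≤ c ⊔ m :=
    fun a S => glb_fin hm hd a S S.toFinite
  refine ⟨fun a => ?_, fun π hπ => ?_⟩
  · obtain ⟨m, h, _⟩ := K a (Xset a) (fun s hs => hs.2)
    exact ⟨m, h⟩
  have le_pi : ∀ a, a ≤ π a := fun a => (hπ a).2 fun s hs => hs.2
  have pi_le : ∀ a x, DualAtom x → a ≤ x → π a ≤ x := fun a x h1 h2 => (hπ a).1 ⟨h1, h2⟩
  have mono : ∀ a b, a ≤ b → π a ≤ π b := fun a b hab =>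
    (hπ b).2 fun s hs => pi_le a s hs.1 (hab.trans hs.2)
  have dicho : ∀ x c : A, DualAtom x → c ≤ x ∨ c ⊔ x = ⊤ := fun x c hx => by
    rcases hx.2 (c ⊔ x) le_sup_right with h | h
    · exact Or.inl (sup_eq_right.1 h)
    · exact Or.inr h
  refine ⟨top_le_iff.1 (le_pi ⊤), fun a b => ?_, fun a b m h => ?_, fun a x hx => ?_, fun b hb => ?_⟩
  · apply le_antisymm
    · obtain ⟨m, h, hc⟩ := K a (Xset a) (fun s hs => hs.2)
      obtain rfl := h.unique (hπ a)
      rw [sup_comm (π a)]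
      refine hc _ _ fun s hs => ?_
      rcases dicho s (π b) hs.1 with h1 | h1
      · exact (pi_le _ s hs.1 (sup_le hs.2 ((le_pi b).trans h1))).trans le_sup_right
      · rw [h1]; exact le_top
    · exact sup_le (mono _ _ le_sup_left) (mono _ _ le_sup_right)
  · refine ⟨?_, fun z hz => (hπ m).2 fun x hx => ?_⟩
    · rintro x (rfl | rfl)
      · exact mono _ _ (h.1 (by simp))
      · exact mono _ _ (h.1 (by simp))
    · have za : z ≤ π a := hz (by simp)
      have zb : z ≤ π b := hz (by simp)
      rcases dicho x a hx.1 with h1 | h1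
      · exact za.trans (pi_le a x hx.1 h1)
      rcases dicho x b hx.1 with h2 | h2
      · exact zb.trans (pi_le b x hx.1 h2)
      have := glb_bin hm hd (c := x) (p := ⊤) h (by rw [sup_comm, h1]) (by rw [sup_comm, h2])
      rw [sup_eq_left.2 hx.2] at this
      exact absurd (top_le_iff.1 this) hx.1.1
  · obtain ⟨y, h, hc⟩ := K (π a) {d | d ∈ Xset a ∧ ¬ x ≤ d} (fun s hs => (hπ a).1 hs.1)
    have hy : π a ≤ y := h.2 fun s hs => (hπ a).1 hs.1
    refine ⟨y, hy, top_le_iff.1 (hc _ _ fun s hs => ?_), ?_, fun z hz => (hπ a).2 fun d hd' => ?_⟩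
    · rw [(dicho s x hs.1.1).resolve_left hs.2]
    · rintro w (rfl | rfl)
      · exact hx
      · exact hy
    · by_cases hxd : x ≤ d
      · exact (hz (by simp : x ∈ _)).trans hxd
      · exact (hz (by simp : y ∈ _)).trans (h.1 ⟨hd', hxd⟩)
  · obtain ⟨y, hby, hj, hg⟩ := hb (π b) (le_pi b)
    rcases eq_top_or_exists_le_coatom y with rfl | ⟨d, hd1, hd2⟩
    · refine le_antisymm (hg.2 ?_) (le_pi b)
      rintro w (rfl | rfl)
      · exact le_rfl
      · exact le_top
    · have hda : DualAtom d := ⟨hd1.1, fun x hx => (hd1.le_iff.1 hx).symm⟩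
      have := sup_le (pi_le b d hda (hby.trans hd2)) hd2
      rw [hj] at this
      exact absurd (top_le_iff.1 this) hd1.1
end

section
/- Let A be a distributive nearlattice. Then C(A) is a nearlattice subalgebra of A: 1 ∈ C(A); if a, b ∈ C(A) then a ∨ b ∈ C(A); and if a, b ∈ C(A) and the meet a ∧ b exists in A, then a ∧ b ∈ C(A). -/
/-- A complemented element: the filter generated by `[a) ∪ a^⊤` is all of `A`;
concretely, for every `x` there are `u, v` with `a ≤ u`, `a ∨ v = 1`, such that
`u ∧ v` exists and `u ∧ v ≤ x`. -/
def ComplElt {A : Type*} [SemilatticeSup A] [OrderTop A] (a : A) : Prop :=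
  ∀ x : A, ∃ u v m : A, a ≤ u ∧ a ⊔ v = ⊤ ∧ IsGLB ({u, v} : Set A) m ∧ m ≤ x

theorem nl_split {A : Type*} [SemilatticeSup A] (hm : HasPartialMeets A)
    (hd : UpsetDistrib A) (c x y z t : A) (hx : c ≤ x) (hy : c ≤ y) (hz : c ≤ z)
    (h : x ≤ y ⊔ z) (h1 : ∀ w, w ≤ x → w ≤ y → w ≤ t)
    (h2 : ∀ w, w ≤ x → w ≤ z → w ≤ t) : x ≤ t := by
  obtain ⟨p, hp⟩ := hm x y ⟨c, hx, hy⟩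
  obtain ⟨q, hq⟩ := hm x z ⟨c, hx, hz⟩
  have hxx : IsGLB ({x, y ⊔ z} : Set A) x := by
    refine ⟨?_, fun w hw => hw (by simp)⟩
    rintro w (rfl | rfl)
    · exact le_rfl
    · exact h
  rw [hd c x y z x p q hx hy hz hxx hp hq]
  exact sup_le (h1 p (hp.1 (by simp)) (hp.1 (by simp)))
    (h2 q (hq.1 (by simp)) (hq.1 (by simp)))

theorem nl_glb {A : Type*} [SemilatticeSup A] {y z m : A}
    (h : IsGLB ({y, z} : Set A) m) : m ≤ y ∧ m ≤ z ∧ ∀ w, w ≤ y → w ≤ z → w ≤ m := by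
  refine ⟨h.1 (by simp), h.1 (by simp), fun w h1 h2 => h.2 ?_⟩
  rintro w (rfl | rfl) <;> assumption

theorem nl_dual {A : Type*} [SemilatticeSup A] [OrderTop A] (hm : HasPartialMeets A)
    (hd : UpsetDistrib A) (y z m p : A) (h : IsGLB ({y, z} : Set A) m)
    (h1 : y ⊔ p = ⊤) (h2 : z ⊔ p = ⊤) : m ⊔ p = ⊤ := by
  obtain ⟨hy, hz, hg⟩ := nl_glb h
  have key : y ≤ m ⊔ p := by
    apply nl_split hm hd m y z (m ⊔ p) _ hy hz le_sup_left
    · rw [sup_left_comm, h2]; simp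
    · intro w a b
      exact (hg w a b).trans le_sup_left
    · intro w _ b
      exact b
  rw [eq_top_iff, ← h1]
  exact sup_le key le_sup_right

theorem nl_compl {A : Type*} [SemilatticeSup A] [OrderTop A] (hm : HasPartialMeets A)
    (hd : UpsetDistrib A) (a : A) (ha : ComplElt a) (x : A) :
    ∃ v, x ≤ v ∧ a ⊔ v = ⊤ ∧ ∀ z, z ≤ a ⊔ x → z ≤ v → z ≤ x := by
  obtain ⟨u, v, m, hu, hv, h, hmx⟩ := ha x
  obtain ⟨hmu, hmv, hg⟩ := nl_glb h
  refine ⟨v ⊔ x, le_sup_right, by rw [← sup_assoc, hv]; simp, fun z h1 h2 => ?_⟩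
  refine le_sup_left.trans (?_ : z ⊔ m ≤ x)
  have h3 : z ⊔ m ≤ u ⊔ x :=
    sup_le (h1.trans (sup_le_sup_right hu x)) (hmu.trans le_sup_left)
  apply nl_split hm hd m (z ⊔ m) v x x le_sup_right hmv hmx
    (sup_le h2 (hmv.trans le_sup_left)) _ (fun w _ b => b)
  intro w hw hwv
  refine le_sup_left.trans (?_ : w ⊔ m ≤ x)
  apply nl_split hm hd m (w ⊔ m) u x x le_sup_right hmu hmx
    (sup_le (hw.trans h3) (hmu.trans le_sup_left)) _ (fun w _ b => b)
  intro t ht htu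
  exact (hg t htu (ht.trans (sup_le hwv hmv))).trans hmx

theorem nl_mk {A : Type*} [SemilatticeSup A] [OrderTop A] (a : A)
    (h : ∀ x, ∃ v, x ≤ v ∧ a ⊔ v = ⊤ ∧ ∀ z, x ≤ z → z ≤ a ⊔ x → z ≤ v → z ≤ x) :
    ComplElt a := by
  intro x
  obtain ⟨v, hx, hv, hz⟩ := h x
  refine ⟨a ⊔ x, v, x, le_sup_left, hv, ⟨?_, ?_⟩, le_rfl⟩
  · rintro w (rfl | rfl)
    · exact le_sup_right
    · exact hx
  · intro z hzz
    have h1 : z ≤ a ⊔ x := hzz (by simp)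
    have h2 : z ≤ v := hzz (by simp)
    exact le_sup_left.trans (hz (z ⊔ x) le_sup_right (sup_le h1 le_sup_right) (sup_le h2 hx))

/-- in a distributive nearlattice, the complemented elements form a
nearlattice subalgebra: they contain `1`, are closed under `∨`, and closed under
existing meets. -/
theorem complemented_elements_subalgebra {A : Type*} [SemilatticeSup A]
    [OrderTop A] (hm : HasPartialMeets A) (hd : UpsetDistrib A) :
    ComplElt (⊤ : A) ∧
      (∀ a b : A, ComplElt a → ComplElt b → ComplElt (a ⊔ b)) ∧
      (∀ a b m : A, ComplElt a → ComplElt b →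
        IsGLB ({a, b} : Set A) m → ComplElt m) := by
  refine ⟨nl_mk _ fun x => ⟨x, le_rfl, by simp, fun z _ _ h => h⟩, ?_, ?_⟩
  · intro a b ha hb
    refine nl_mk _ fun x => ?_
    obtain ⟨ac, hxa, hat, hac⟩ := nl_compl hm hd a ha x
    obtain ⟨bc, hxb, hbt, hbc⟩ := nl_compl hm hd b hb x
    obtain ⟨v, hv⟩ := hm ac bc ⟨x, hxa, hxb⟩
    obtain ⟨hva, hvb, hg⟩ := nl_glb hv
    refine ⟨v, hg x hxa hxb, ?_, fun z hxz h1 h2 => ?_⟩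
    · rw [sup_comm]
      apply nl_dual hm hd ac bc v _ hv
      · rw [← sup_assoc, sup_comm ac a, hat]; simp
      · rw [sup_left_comm, sup_comm bc b, hbt, sup_top_eq]
    · apply nl_split hm hd x z (a ⊔ x) (b ⊔ x) x hxz le_sup_right le_sup_right
      · rw [← sup_sup_distrib_right]; exact h1
      · intro w hw hwa
        exact hac w hwa (hw.trans (h2.trans hva))
      · intro w hw hwb
        exact hbc w hwb (hw.trans (h2.trans hvb))
  · intro a b m ha hb h
    refine nl_mk _ fun x => ?_
    obtain ⟨ac, hxa, hat, hac⟩ := nl_compl hm hd a ha x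
    obtain ⟨bc, hxb, hbt, hbc⟩ := nl_compl hm hd b hb x
    obtain ⟨hma, hmb, hg⟩ := nl_glb h
    refine ⟨ac ⊔ bc, hxa.trans le_sup_left, ?_, fun z hxz h1 h2 => ?_⟩
    · apply nl_dual hm hd a b m _ h
      · rw [← sup_assoc, hat]; simp
      · rw [sup_left_comm, hbt]; simp
    · apply nl_split hm hd x z ac bc x hxz hxa hxb h2
      · intro w hw hwa
        exact hac w (hw.trans (h1.trans (sup_le_sup_right hma x))) hwa
      · intro w hw hwb
        exact hbc w (hw.trans (h1.trans (sup_le_sup_right hmb x))) hwb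
end

section
/- Let A be a distributive nearlattice and let a, b ∈ C(A) with a ≤ b. Then there exists y ∈ C(A) with a ≤ y, b ∨ y = 1 and b ∧ y = a (y is a complement of b in the interval [a) ∩ C(A)). Consequently every principal upset of C(A) is a boolean lattice, i.e., ⟨C(A), ∨, 1⟩ is a semi-boolean algebra. -/
theorem nearlattice_dual_distrib {A : Type*} [SemilatticeSup A]
    (hm : HasPartialMeets A) (hd : UpsetDistrib A) {c x y z m l : A}
    (hx : c ≤ x) (hy : c ≤ y) (hz : c ≤ z) (h : IsGLB ({y, z} : Set A) m)
    (h1 : l ≤ x ⊔ y) (h2 : l ≤ x ⊔ z) : l ≤ x ⊔ m := by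
  have hcxy : c ≤ x ⊔ y := hx.trans le_sup_left
  obtain ⟨G, hG⟩ := hm (x ⊔ y) (x ⊔ z) ⟨c, hcxy, hx.trans le_sup_left⟩
  obtain ⟨g1, hg1⟩ := hm (x ⊔ y) x ⟨c, hcxy, hx⟩
  obtain ⟨g2, hg2⟩ := hm (x ⊔ y) z ⟨c, hcxy, hz⟩
  obtain ⟨g3, hg3⟩ := hm z x ⟨c, hz, hx⟩
  have e1 := hd c _ _ _ _ _ _ hcxy hx hz hG hg1 hg2
  have e2 := hd c z x y g2 g3 m hz hx hy (by rwa [Set.pair_comm]) hg3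
    (by rwa [Set.pair_comm])
  have hl : l ≤ G := hG.2 (by simp [lowerBounds, h1, h2])
  have k1 : g1 ≤ x := hg1.1 (by simp)
  have k3 : g3 ≤ x := hg3.1 (by simp)
  rw [e1, e2] at hl
  exact hl.trans (sup_le (k1.trans le_sup_left) (sup_le_sup_right k3 m))

/-- in a distributive nearlattice, for complemented `a ≤ b` there
is a complemented `y` with `a ≤ y`, `b ∨ y = 1` and `b ∧ y = a`; hence the
complemented elements form a semi-boolean algebra. -/
theorem complemented_elements_semi_boolean {A : Type*} [SemilatticeSup A]
    [OrderTop A] (hm : HasPartialMeets A) (hd : UpsetDistrib A)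
    (a b : A) (ha : ComplElt a) (hb : ComplElt b) (hab : a ≤ b) :
    ∃ y : A, ComplElt y ∧ a ≤ y ∧ b ⊔ y = ⊤ ∧ IsGLB ({b, y} : Set A) a := by
  obtain ⟨u, v, m, hu, hv, hg, hma⟩ := hb a
  have hmu : m ≤ u := hg.1 (by simp)
  have hmv : m ≤ v := hg.1 (by simp)
  obtain ⟨y, hy⟩ : ∃ y, y = a ⊔ v := ⟨_, rfl⟩
  have hay : a ≤ y := hy ▸ le_sup_left
  have hby : b ⊔ y = ⊤ := by
    rw [hy, sup_left_comm, hv]; simp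
  have hglb : IsGLB ({b, y} : Set A) a := by
    refine ⟨by simp [lowerBounds, hab, hay], fun l hl => ?_⟩
    have l1 : l ≤ b := hl (by simp)
    have l2 : l ≤ y := hl (by simp)
    have := nearlattice_dual_distrib hm hd hma hmu hmv hg
      ((l1.trans hu).trans le_sup_right) (hy ▸ l2)
    rwa [sup_eq_left.2 hma] at this
  refine ⟨y, fun x => ?_, hay, hby, hglb⟩
  obtain ⟨u1, v1, m1, hu1, hv1, hg1, hmx⟩ := ha x
  have hmu1 : m1 ≤ u1 := hg1.1 (by simp)
  have hmv1 : m1 ≤ v1 := hg1.1 (by simp)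
  obtain ⟨q, hq⟩ := hm (x ⊔ b) (x ⊔ v1) ⟨x, le_sup_left, le_sup_left⟩
  have hxq : x ≤ q := hq.2 (by simp [lowerBounds])
  have hqb : q ≤ x ⊔ b := hq.1 (by simp)
  have hqv : q ≤ x ⊔ v1 := hq.1 (by simp)
  obtain ⟨n, hn⟩ := hm (x ⊔ y) q ⟨x, le_sup_left, hxq⟩
  have hnp : n ≤ x ⊔ y := hn.1 (by simp)
  have hnq : n ≤ q := hn.1 (by simp)
  refine ⟨x ⊔ y, q, n, le_sup_right, ?_, hn, ?_⟩
  · have h := nearlattice_dual_distrib (l := ⊤) hm hd (c := x) (x := x ⊔ y)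
      le_sup_left le_sup_left le_sup_left hq
      (by rw [← hby]; exact sup_le (le_sup_right.trans le_sup_right)
            (le_sup_right.trans le_sup_left))
      (by rw [← hv1]; exact sup_le ((hay.trans le_sup_right).trans le_sup_left)
            (le_sup_right.trans le_sup_right))
    refine top_le_iff.1 (h.trans ?_)
    exact sup_le (sup_le (hxq.trans le_sup_right) le_sup_left) le_sup_right
  · have h := nearlattice_dual_distrib (l := n) hm hd (c := a) (x := x ⊔ a)
      le_sup_right hab hay hglb
      ((hnq.trans hqb).trans (sup_le_sup_right le_sup_left b))
      (hnp.trans (sup_le_sup_right le_sup_left y))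
    have h' : n ≤ x ⊔ u1 := h.trans
      (sup_le (sup_le_sup_left hu1 x) (hu1.trans le_sup_right))
    have := nearlattice_dual_distrib hm hd hmx hmu1 hmv1 hg1 h' (hnq.trans hqv)
    rwa [sup_eq_left.2 hmx] at this
end

section
/- Let A be a finite distributive nearlattice. Then every element of A is boolean (equivalently, A is a semi-boolean algebra) if and only if B(A) = C(A). -/
/-- a finite distributive nearlattice is a semi-boolean algebra
(every element is boolean) iff its boolean and complemented elements coincide. -/
theorem semi_boolean_iff_boolean_eq_complemented {A : Type*} [SemilatticeSup A]
    [OrderTop A] [Finite A] (hm : HasPartialMeets A) (hd : UpsetDistrib A) :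
    (∀ a : A, BooleanElt a) ↔ {a : A | BooleanElt a} = {a : A | ComplElt a} := by
  constructor
  · intro h
    ext a
    refine ⟨fun _ x => ?_, fun _ => h a⟩
    obtain ⟨y, hxy, htop, hglb⟩ := h x (a ⊔ x) le_sup_right
    refine ⟨a ⊔ x, y, x, le_sup_left, ?_, hglb, le_rfl⟩
    rw [sup_assoc, sup_eq_right.2 hxy] at htop
    exact htop
  · intro h a
    induction a using (Finite.wellFounded_of_trans_of_irrefl
      (fun x y : A => y < x)).induction with
    | _ a ih =>
    intro x hax
    rcases hax.eq_or_lt with rfl | hlt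
    · refine ⟨⊤, le_top, sup_top_eq _, ?_⟩
      constructor
      · rintro z (rfl | rfl)
        · exact le_rfl
        · exact le_top
      · intro z hz
        exact hz (by simp)
    · have hc : ComplElt x := by
        have hx : x ∈ {a : A | BooleanElt a} := ih x hlt
        rw [h] at hx
        exact hx
      obtain ⟨u, v, m, hxu, hxv, hglb, hma⟩ := hc a
      have hmv : m ≤ v := hglb.1 (by simp)
      refine ⟨v ⊔ a, le_sup_right, ?_, ?_⟩
      · rw [← sup_assoc, hxv, top_sup_eq]
      · obtain ⟨m₁, h₁⟩ := hm x (v ⊔ a) ⟨a, hax, le_sup_right⟩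
        obtain ⟨m₂, h₂⟩ := hm x v ⟨m, hma.trans hax, hmv⟩
        have h₃ : IsGLB ({x, a} : Set A) a := by
          constructor
          · rintro z (rfl | rfl)
            · exact hax
            · exact le_rfl
          · intro z hz
            exact hz (by simp)
        have e := hd m x v a m₁ m₂ a (hma.trans hax) hmv hma h₁ h₂ h₃
        have hm₂ : m₂ ≤ m := by
          apply hglb.2
          rintro z (rfl | rfl)
          · exact (h₂.1 (by simp)).trans hxu
          · exact h₂.1 (by simp)
        rw [sup_eq_right.2 (hm₂.trans hma)] at e
        rwa [e] at h₁
end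

section
/- Let A be a distributive nearlattice, L a bounded distributive lattice, and e : A → L an injective N-homomorphism such that e[A] is finitely meet-dense in L. Then for every a ∈ A: (1) e[[a)] = [e(a)), i.e., {e(x) : x ∈ A, a ≤ x} = {u ∈ L : e(a) ≤ u}; (2) an element u ∈ L satisfies u ∨ e(a) = 1_L if and only if there exist n ≥ 1 and a₁, …, aₙ ∈ A with a ∨ aᵢ = 1 for each i and u = e(a₁) ∧ … ∧ e(aₙ) (equivalently, the filter of L generated by e[a^⊤] equals e(a)^⊤). -/
/-- let `A` be a distributive nearlattice, `L` a bounded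
distributive lattice and `e : A → L` an injective N-homomorphism with `e[A]`
finitely meet-dense in `L`.  Then (1) `e[[a)] = [e(a))`, and (2) `u ∨ e(a) = 1`
iff `u` is a finite (nonempty) meet of images of elements of `a^⊤`. -/
theorem free_extension_upset_and_annihilator {A L : Type*} [SemilatticeSup A]
    [OrderTop A] [DistribLattice L] [BoundedOrder L]
    (hm : HasPartialMeets A) (hd : UpsetDistrib A)
    (e : A → L) (hinj : Function.Injective e)
    (htop : e ⊤ = ⊤)
    (hsup : ∀ a b : A, e (a ⊔ b) = e a ⊔ e b)
    (hinf : ∀ a b m : A, IsGLB ({a, b} : Set A) m → e m = e a ⊓ e b)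
    (hdense : ∀ u : L, ∃ s : Finset A, s.Nonempty ∧ u = s.inf e) :
    (∀ a : A, e '' Set.Ici a = Set.Ici (e a)) ∧
      (∀ (a : A) (u : L), u ⊔ e a = ⊤ ↔
        ∃ s : Finset A, s.Nonempty ∧ (∀ b ∈ s, a ⊔ b = ⊤) ∧ u = s.inf e) := by
  classical
  have hle : ∀ a b : A, e a ≤ e b → a ≤ b := by
    intro a b h
    have h1 : e (a ⊔ b) = e b := by rw [hsup]; exact sup_eq_right.mpr h
    exact sup_eq_right.mp (hinj h1)
  have hmono : ∀ a b : A, a ≤ b → e a ≤ e b := by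
    intro a b h
    have h1 := hsup a b
    rw [sup_eq_right.mpr h] at h1
    rw [h1]; exact le_sup_left
  have key : ∀ (a : A) (s : Finset A), (∀ b ∈ s, a ≤ b) → ∃ m, a ≤ m ∧ e m = s.inf e := by
    intro a s
    induction s using Finset.induction_on with
    | empty => intro _; exact ⟨⊤, le_top, by simp [htop]⟩
    | insert b s hb ih =>
      intro h
      obtain ⟨m, hm1, hm2⟩ := ih (fun c hc => h c (Finset.mem_insert_of_mem hc))
      have hab : a ≤ b := h b (Finset.mem_insert_self _ _)
      obtain ⟨k, hk⟩ := hm b m ⟨a, hab, hm1⟩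
      refine ⟨k, hk.2 ?_, ?_⟩
      · intro x hx
        rcases hx with rfl | hx
        · exact hab
        · rw [Set.mem_singleton_iff.mp hx]; exact hm1
      · rw [Finset.inf_insert, hinf _ _ _ hk, hm2]
  refine ⟨fun a => ?_, fun a u => ⟨fun h => ?_, ?_⟩⟩
  · ext u
    constructor
    · rintro ⟨x, hx, rfl⟩
      exact hmono _ _ hx
    · intro hu
      obtain ⟨s, -, rfl⟩ := hdense u
      obtain ⟨m, h1, h2⟩ := key a s
        (fun b hb => hle _ _ (le_trans hu (Finset.inf_le hb)))
      exact ⟨m, h1, h2⟩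
  · obtain ⟨s, hs, rfl⟩ := hdense u
    refine ⟨s, hs, fun b hb => hinj ?_, rfl⟩
    rw [hsup, htop, eq_top_iff, ← h, sup_comm]
    exact sup_le_sup_left (Finset.inf_le hb) _
  · rintro ⟨s, -, h, rfl⟩
    rw [Finset.inf_sup_distrib_right, eq_top_iff]
    refine Finset.le_inf fun b hb => ?_
    rw [sup_comm, ← hsup, h b hb, htop]
end

section
/- Let A be a finite distributive nearlattice, L a bounded distributive lattice, and e : A → L an injective N-homomorphism such that e[A] is finitely meet-dense in L. Then: (1) e[At(A)] = At(L), the set of dual atoms (coatoms) of L; (2) if a is a boolean element of A then e(a) is a boolean element of L, i.e., the interval [e(a), 1_L] is a boolean lattice; (3) if a ∈ C(A) then e(a) is a complemented element of L: there exists w ∈ L with e(a) ∨ w = 1_L and e(a) ∧ w = 0_L. -/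
/-- for a finite distributive nearlattice `A` embedded (via an
injective, finitely meet-dense N-homomorphism `e`) in a bounded distributive
lattice `L`: (1) `e` maps the dual atoms of `A` onto the dual atoms of `L`;
(2) `e` sends boolean elements to boolean elements; (3) `e` sends complemented
elements to complemented elements of `L`. -/
theorem free_extension_preserves_atoms_boolean_complemented {A L : Type*}
    [SemilatticeSup A] [OrderTop A] [Finite A] [DistribLattice L] [BoundedOrder L]
    (hm : HasPartialMeets A) (hd : UpsetDistrib A)
    (e : A → L) (hinj : Function.Injective e)
    (htop : e ⊤ = ⊤)
    (hsup : ∀ a b : A, e (a ⊔ b) = e a ⊔ e b)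
    (hinf : ∀ a b m : A, IsGLB ({a, b} : Set A) m → e m = e a ⊓ e b)
    (hdense : ∀ u : L, ∃ s : Finset A, s.Nonempty ∧ u = s.inf e) :
    (e '' {a : A | DualAtom a} = {u : L | DualAtom u}) ∧
      (∀ a : A, BooleanElt a →
        ∀ u : L, e a ≤ u → ∃ v : L, e a ≤ v ∧ u ⊔ v = ⊤ ∧ u ⊓ v = e a) ∧
      (∀ a : A, ComplElt a → ∃ w : L, e a ⊔ w = ⊤ ∧ e a ⊓ w = ⊥) := by
  have hmono : ∀ a b : A, a ≤ b → e a ≤ e b := by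
    intro a b h
    have h1 := hsup a b
    rw [sup_eq_right.mpr h] at h1
    rw [h1]
    exact le_sup_left
  have hrefl : ∀ a b : A, e a ≤ e b → a ≤ b := by
    intro a b h
    have h1 := hsup a b
    rw [sup_eq_right.mpr h] at h1
    exact sup_eq_right.mp (hinj h1)
  have hup : ∀ (a : A) (u : L), e a ≤ u → ∃ c, a ≤ c ∧ u = e c := by
    intro a u hu
    obtain ⟨s, -, rfl⟩ := hdense u
    induction s using Finset.cons_induction with
    | empty => exact ⟨⊤, le_top, by simp [htop]⟩
    | cons b t hb ih =>
      rw [Finset.inf_cons] at hu ⊢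
      obtain ⟨c, hac, hc⟩ := ih (hu.trans inf_le_right)
      have hab := hrefl a b (hu.trans inf_le_left)
      obtain ⟨m, hmm⟩ := hm b c ⟨a, hab, hac⟩
      refine ⟨m, hmm.2 ?_, ?_⟩
      · rintro x (rfl | rfl) <;> assumption
      · rw [hinf b c m hmm, hc]
  refine ⟨?_, ?_, ?_⟩
  · ext u
    constructor
    · rintro ⟨a, ⟨hne, ha⟩, rfl⟩
      refine ⟨fun h => hne (hinj (h.trans htop.symm)), fun x hx => ?_⟩
      obtain ⟨c, hac, rfl⟩ := hup a x hx
      rcases ha c hac with rfl | rfl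
      · exact Or.inl rfl
      · exact Or.inr htop
    · rintro ⟨hne, hu⟩
      obtain ⟨s, -, hs⟩ := hdense u
      have : ∃ b ∈ s, e b ≠ ⊤ := by
        by_contra! h
        apply hne
        rw [hs, Finset.inf_eq_top_iff]
        exact h
      obtain ⟨b, hb, hbt⟩ := this
      have hbu : e b = u := (hu (e b) (hs ▸ Finset.inf_le hb)).resolve_right hbt
      refine ⟨b, ⟨fun h => hbt (h ▸ htop), fun x hx => ?_⟩, hbu⟩
      rcases hu (e x) (hbu ▸ hmono b x hx) with h | h
      · exact Or.inl (hinj (h.trans hbu.symm))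
      · exact Or.inr (hinj (h.trans htop.symm))
  · intro a ha u hu
    obtain ⟨c, hac, rfl⟩ := hup a u hu
    obtain ⟨y, hay, hy, hg⟩ := ha c hac
    exact ⟨e y, hmono a y hay, by rw [← hsup, hy, htop], (hinf c y a hg).symm⟩
  · intro a ha
    choose u v m hau hav hg hle using ha
    obtain ⟨s, -, hs⟩ := hdense ⊥
    refine ⟨s.inf (fun x => e (v x)), ?_, ?_⟩
    · rw [Finset.inf_sup_distrib_left, Finset.inf_eq_top_iff]
      intro x _
      rw [← hsup, hav, htop]
    · rw [eq_bot_iff, hs]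
      refine Finset.le_inf fun x hx => ?_
      calc _ ≤ e (u x) ⊓ e (v x) :=
            inf_le_inf (hmono _ _ (hau x)) (Finset.inf_le (f := fun x => e (v x)) hx)
        _ = e (m x) := (hinf _ _ _ (hg x)).symm
        _ ≤ e x := hmono _ _ (hle x)
end

section
/- Let A be a finite distributive nearlattice, L a finite bounded distributive lattice, and e : A → L an injective N-homomorphism such that e[A] is finitely meet-dense in L. For every a ∈ A, the greatest lower bound ⋀{x ∈ At(A) : a ≤ x} exists in A, and in L one has ⋀{z ∈ At(L) : e(a) ≤ z} = e(⋀{x ∈ At(A) : a ≤ x}); that is, π_L ∘ e = e ∘ π_A, where π denotes the map sending an element to the meet of all dual atoms above it (with the empty meet equal to the top element). -/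
/-- with `A` a finite distributive nearlattice embedded via `e` in
a finite bounded distributive lattice `L` (injective, finitely meet-dense
N-homomorphism), for every `a ∈ A` the meet `⋀{x ∈ At(A) : a ≤ x}` exists in
`A`, and `⋀{z ∈ At(L) : e(a) ≤ z} = e(⋀{x ∈ At(A) : a ≤ x})`; that is,
`π_L ∘ e = e ∘ π_A`. -/
theorem pi_commutes_with_free_extension {A L : Type*}
    [SemilatticeSup A] [OrderTop A] [Finite A]
    [DistribLattice L] [BoundedOrder L] [Finite L]
    (hm : HasPartialMeets A) (hd : UpsetDistrib A)
    (e : A → L) (hinj : Function.Injective e)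
    (htop : e ⊤ = ⊤)
    (hsup : ∀ a b : A, e (a ⊔ b) = e a ⊔ e b)
    (hinf : ∀ a b m : A, IsGLB ({a, b} : Set A) m → e m = e a ⊓ e b)
    (hdense : ∀ u : L, ∃ s : Finset A, s.Nonempty ∧ u = s.inf e) :
    ∀ a : A, ∃ b : A, IsGLB {x : A | DualAtom x ∧ a ≤ x} b ∧
      IsGLB {z : L | DualAtom z ∧ e a ≤ z} (e b) := by
  have hle : ∀ x y : A, e x ≤ e y ↔ x ≤ y := by
    intro x y
    rw [← sup_eq_right, ← hsup, hinj.eq_iff, sup_eq_right]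
  have htop' : ∀ x : A, e x = ⊤ ↔ x = ⊤ := by
    intro x
    rw [← htop, hinj.eq_iff]
  have h1 : ∀ x : A, DualAtom x → DualAtom (e x) := by
    rintro x ⟨hx, hx'⟩
    refine ⟨fun h => hx ((htop' x).1 h), fun u hu => ?_⟩
    obtain ⟨s, -, rfl⟩ := hdense u
    by_cases hs : x ∈ s
    · exact Or.inl (le_antisymm (Finset.inf_le hs) hu)
    · right
      rw [eq_top_iff]
      refine Finset.le_inf fun y hy => ?_
      rcases hx' y ((hle x y).1 (hu.trans (Finset.inf_le hy))) with h | h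
      · exact absurd (h ▸ hy) hs
      · rw [h, htop]
  have h2 : ∀ z : L, DualAtom z → ∃ x : A, DualAtom x ∧ e x = z := by
    rintro z ⟨hz, hz'⟩
    obtain ⟨s, -, hs⟩ := hdense z
    have : ∃ x ∈ s, e x ≠ ⊤ := by
      by_contra hcon
      push Not at hcon
      apply hz
      rw [hs, eq_top_iff]
      exact Finset.le_inf fun y hy => (hcon y hy).ge
    obtain ⟨x, hx, hxt⟩ := this
    have hxz : e x = z := (hz' (e x) (hs ▸ Finset.inf_le hx)).resolve_right hxt
    refine ⟨x, ⟨fun h => hxt ((htop' x).2 h), fun y hy => ?_⟩, hxz⟩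
    rcases hz' (e y) (hxz ▸ (hle x y).2 hy) with h | h
    · exact Or.inl (hinj (h.trans hxz.symm))
    · exact Or.inr ((htop' y).1 h)
  intro a
  have himg : {z : L | DualAtom z ∧ e a ≤ z} = e '' {x : A | DualAtom x ∧ a ≤ x} := by
    ext z
    constructor
    · rintro ⟨hz, haz⟩
      obtain ⟨x, hx, rfl⟩ := h2 z hz
      exact ⟨x, ⟨hx, (hle a x).1 haz⟩, rfl⟩
    · rintro ⟨x, ⟨hx, hax⟩, rfl⟩
      exact ⟨h1 x hx, (hle a x).2 hax⟩
  rw [himg]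
  have key : ∀ S : Set A, S.Finite → (∀ x ∈ S, a ≤ x) →
      ∃ b, IsGLB S b ∧ IsGLB (e '' S) (e b) := by
    intro S hS
    induction S, hS using Set.Finite.induction_on with
    | empty =>
      intro _
      refine ⟨⊤, by simp, by simp [htop]⟩
    | @insert x S _ _ ih =>
      intro h
      obtain ⟨b, hb, hb'⟩ := ih fun y hy => h y (Set.mem_insert_of_mem _ hy)
      obtain ⟨m, hmm⟩ := hm x b ⟨a, h x (Set.mem_insert _ _),
        hb.2 fun y hy => h y (Set.mem_insert_of_mem _ hy)⟩
      refine ⟨m, ?_, ?_⟩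
      · have hx : m ≤ x := hmm.1 (by simp)
        have hmb : m ≤ b := hmm.1 (by simp)
        constructor
        · rintro y (rfl | hy)
          · exact hx
          · exact hmb.trans (hb.1 hy)
        · intro c hc
          apply hmm.2
          rintro y (rfl | hy)
          · exact hc (Set.mem_insert _ _)
          · rw [Set.mem_singleton_iff.1 hy]
            exact hb.2 fun w hw => hc (Set.mem_insert_of_mem _ hw)
      · rw [hinf x b m hmm, Set.image_insert_eq]
        exact hb'.insert (e x)
  exact key _ (Set.toFinite _) fun x hx => hx.2
end

section
/- Let A be a distributive nearlattice and a ∈ A. Then the following are equivalent: (1) for all x, y ∈ A such that x ∧ y exists in A, a = x ∧ y implies a = x or a = y; (2) for all x, y ∈ A such that x ∧ y exists in A, x ∧ y ≤ a implies x ≤ a or y ≤ a. -/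
/-- in a distributive nearlattice, `a` is meet-irreducible
(`a = x ∧ y` implies `a = x` or `a = y`, for existing meets) iff it is
meet-prime (`x ∧ y ≤ a` implies `x ≤ a` or `y ≤ a`, for existing meets). -/
theorem nearlattice_irreducible_iff_prime {A : Type*} [SemilatticeSup A] [OrderTop A]
    (hm : HasPartialMeets A) (hd : UpsetDistrib A) (a : A) :
    (∀ x y m : A, IsGLB ({x, y} : Set A) m → a = m → a = x ∨ a = y) ↔
      (∀ x y m : A, IsGLB ({x, y} : Set A) m → m ≤ a → x ≤ a ∨ y ≤ a) := by
  constructor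
  · intro h x y m hg hma
    have glb : ∀ {u v w : A}, IsGLB ({u, v} : Set A) w →
        w ≤ u ∧ w ≤ v ∧ ∀ z, z ≤ u → z ≤ v → z ≤ w := by
      intro u v w hw
      refine ⟨hw.1 (by simp), hw.1 (by simp), fun z hu hv => hw.2 ?_⟩
      rintro t (rfl | rfl)
      · exact hu
      · exact hv
    obtain ⟨hmx, hmy, hmg⟩ := glb hg
    have hmxa : m ≤ x ⊔ a := le_trans hmx le_sup_left
    obtain ⟨n, hn⟩ := hm (x ⊔ a) (y ⊔ a) ⟨a, le_sup_right, le_sup_right⟩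
    obtain ⟨p, hp⟩ := hm (x ⊔ a) y ⟨m, hmxa, hmy⟩
    obtain ⟨q, hq⟩ := hm (x ⊔ a) a ⟨m, hmxa, hma⟩
    obtain ⟨r, hr⟩ := hm y a ⟨m, hmy, hma⟩
    have e1 : n = p ⊔ q := hd m (x ⊔ a) y a n p q hmxa hmy hma hn hp hq
    have hp' : IsGLB ({y, x ⊔ a} : Set A) p := by rwa [Set.pair_comm]
    have hg' : IsGLB ({y, x} : Set A) m := by rwa [Set.pair_comm]
    have e2 : p = m ⊔ r := hd m y x a p m r hmy hmx hma hp' hg' hr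
    have hna : n ≤ a := by
      rw [e1, e2]
      exact sup_le (sup_le hma (glb hr).2.1) (glb hq).2.1
    have han : a ≤ n := (glb hn).2.2 a le_sup_right le_sup_right
    rcases h _ _ n hn (le_antisymm han hna) with e | e
    · exact Or.inl (le_sup_left.trans e.ge)
    · exact Or.inr (le_sup_left.trans e.ge)
  · rintro h x y m hg rfl
    rcases h x y a hg le_rfl with e | e
    · exact Or.inl (le_antisymm (hg.1 (by simp)) e)
    · exact Or.inr (le_antisymm (hg.1 (by simp)) e)
end

section
/- Let A be a finite distributive nearlattice. Then for every a ∈ A, a is the greatest lower bound in A of the set {x ∈ Irr(A) : a ≤ x} of irreducible elements above a (for a = 1 this set is empty and its greatest lower bound is 1). -/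
/-- A meet-irreducible element: `a ≠ 1` and whenever `x ∧ y` exists with
`a = x ∧ y`, then `a = x` or `a = y`. -/
def IrrElt {A : Type*} [SemilatticeSup A] [OrderTop A] (a : A) : Prop :=
  a ≠ ⊤ ∧ ∀ x y m : A, IsGLB ({x, y} : Set A) m → a = m → a = x ∨ a = y

/-- in a finite distributive nearlattice, every element is the
greatest lower bound of the irreducible elements above it. -/
theorem eq_glb_of_irreducibles_above {A : Type*} [SemilatticeSup A] [OrderTop A]
    [Finite A] (hm : HasPartialMeets A) (hd : UpsetDistrib A) :
    ∀ a : A, IsGLB {x : A | IrrElt x ∧ a ≤ x} a := by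
  intro a
  induction a using WellFoundedGT.induction with
  | ind a ih =>
    refine ⟨fun x hx => hx.2, fun b hb => ?_⟩
    by_cases ht : a = ⊤
    · rw [ht]; exact le_top
    by_cases hi : IrrElt a
    · exact hb ⟨hi, le_rfl⟩
    have hex : ∃ x y : A, IsGLB ({x, y} : Set A) a ∧ a ≠ x ∧ a ≠ y := by
      by_contra hcon
      refine hi ⟨ht, fun x y m h e => ?_⟩
      subst e
      by_contra hne
      rw [not_or] at hne
      exact hcon ⟨x, y, h, hne.1, hne.2⟩
    obtain ⟨x, y, h, hx, hy⟩ := hex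
    have hax : a ≤ x := h.1 (by simp)
    have hay : a ≤ y := h.1 (by simp)
    have key : ∀ z, a ≤ z → a ≠ z → b ≤ z := fun z hz hne =>
      (ih z (lt_of_le_of_ne hz hne)).2 fun w hw => hb ⟨hw.1, hz.trans hw.2⟩
    apply h.2
    rintro z (rfl | rfl)
    · exact key _ hax hx
    · exact key _ hay hy
end

section
/- Let A be a finite distributive nearlattice, L a bounded distributive lattice, and e : A → L an injective N-homomorphism such that e[A] is finitely meet-dense in L. Then e[Irr(A)] = Irr(L), where Irr(L) is the set of meet-irreducible elements of L, i.e., elements u ≠ 1_L such that u = v ∧ w implies u = v or u = w. -/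
/-- for a finite distributive nearlattice `A` embedded (via an
injective, finitely meet-dense N-homomorphism `e`) in a bounded distributive
lattice `L`, `e` maps the meet-irreducible elements of `A` onto the
meet-irreducible elements of `L`. -/
theorem free_extension_irreducibles {A L : Type*}
    [SemilatticeSup A] [OrderTop A] [Finite A] [DistribLattice L] [BoundedOrder L]
    (hm : HasPartialMeets A) (hd : UpsetDistrib A)
    (e : A → L) (hinj : Function.Injective e)
    (htop : e ⊤ = ⊤)
    (hsup : ∀ a b : A, e (a ⊔ b) = e a ⊔ e b)
    (hinf : ∀ a b m : A, IsGLB ({a, b} : Set A) m → e m = e a ⊓ e b)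
    (hdense : ∀ u : L, ∃ s : Finset A, s.Nonempty ∧ u = s.inf e) :
    e '' {a : A | IrrElt a} =
      {u : L | u ≠ ⊤ ∧ ∀ v w : L, u = v ⊓ w → u = v ∨ u = w} := by
  classical
  have hle : ∀ a x : A, e a ≤ e x → a ≤ x := by
    intro a x h
    have h1 : e (a ⊔ x) = e x := by rw [hsup]; exact sup_eq_right.2 h
    exact sup_eq_right.1 (hinj h1)
  ext u
  constructor
  · rintro ⟨a, ⟨hat, hai⟩, rfl⟩
    refine ⟨fun h => hat (hinj (h.trans htop.symm)), ?_⟩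
    intro v w hvw
    have key : ∀ s : Finset A, (∀ x ∈ s, a < x) → ∃ m, a < m ∧ e m = s.inf e := by
      intro s
      induction s using Finset.induction_on with
      | empty => exact fun _ => ⟨⊤, lt_top_iff_ne_top.2 hat, by simp [htop]⟩
      | insert x s hx ih =>
        intro h
        obtain ⟨m, ham, hem⟩ := ih (fun y hy => h y (Finset.mem_insert_of_mem hy))
        have hax := h x (Finset.mem_insert_self x s)
        obtain ⟨k, hk⟩ := hm x m ⟨a, hax.le, ham.le⟩
        refine ⟨k, lt_of_le_of_ne ?_ ?_, ?_⟩
        · apply hk.2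
          rintro z (rfl | rfl)
          · exact hax.le
          · exact ham.le
        · intro hak
          rcases hai x m k hk hak with h' | h'
          · exact hax.ne h'
          · exact ham.ne h'
        · rw [Finset.inf_insert, ← hem, hinf x m k hk]
    have key2 : ∀ v : L, e a ≤ v → e a ≠ v → ∃ m, a < m ∧ e m = v := by
      intro v hv hne
      obtain ⟨s, -, rfl⟩ := hdense v
      apply key s
      intro x hx
      refine lt_of_le_of_ne (hle _ _ (hv.trans (Finset.inf_le hx))) ?_
      rintro rfl
      exact hne (le_antisymm hv (Finset.inf_le hx))
    by_contra! hcon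
    obtain ⟨m, ham, rfl⟩ := key2 v (hvw.le.trans inf_le_left) hcon.1
    obtain ⟨n, han, rfl⟩ := key2 w (hvw.le.trans inf_le_right) hcon.2
    obtain ⟨k, hk⟩ := hm m n ⟨a, ham.le, han.le⟩
    have hak : a = k := hinj (hvw.trans (hinf m n k hk).symm)
    rcases hai m n k hk hak with h' | h'
    · exact ham.ne h'
    · exact han.ne h'
  · rintro ⟨hut, hui⟩
    have key : ∀ s : Finset A, u = s.inf e → ∃ x, u = e x := by
      intro s
      induction s using Finset.induction_on with
      | empty => exact fun h => absurd (by simpa using h) hut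
      | insert x s hx ih =>
        intro h
        rw [Finset.inf_insert] at h
        rcases hui _ _ h with h' | h'
        · exact ⟨x, h'⟩
        · exact ih h'
    obtain ⟨s, -, hs⟩ := hdense u
    obtain ⟨a, rfl⟩ := key s hs
    refine ⟨a, ⟨?_, ?_⟩, rfl⟩
    · rintro rfl
      exact hut htop
    · rintro x y m hk rfl
      rcases hui _ _ (hinf x y a hk) with h' | h'
      · exact Or.inl (hinj h')
      · exact Or.inr (hinj h')
end

section
/- Let ⟨X, γ⟩ be a finite DN-structure and let N(X) = {U ∈ D(X) : γ(U) = 1}, ordered by inclusion. Then: (a) X ∈ N(X); (b) if U, V ∈ N(X) then U ∪ V ∈ N(X); (c) if U, V ∈ N(X) have a common lower bound in N(X) (some W ∈ N(X) with W ⊆ U and W ⊆ V), then U ∩ V ∈ N(X) and U ∩ V is the greatest lower bound of U and V in N(X); hence ⟨N(X), ∪, X⟩ is a distributive nearlattice; (d) the map x ↦ X \ [x) is an order isomorphism from the poset X onto ⟨Irr(N(X)), ⊆⟩, the set of meet-irreducible elements of the nearlattice N(X). -/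
/-- Given `γ : Set X → Bool`, the collection `N(X)` of downsets `U` with
`γ(U) = 1`. -/
def NSet {X : Type*} [Preorder X] (γ : Set X → Bool) : Set (Set X) :=
  {U | IsLowerSet U ∧ γ U = true}

/-- A meet-irreducible element of the nearlattice `N(X)`: a member `U ≠ X` such
that whenever `U = V ∩ W` with `V, W ∈ N(X)` having a common lower bound in
`N(X)` (so that their meet exists in `N(X)`), then `U = V` or `U = W`. -/
def IrrN {X : Type*} [Preorder X] (γ : Set X → Bool) (U : Set X) : Prop :=
  U ∈ NSet γ ∧ U ≠ Set.univ ∧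
    ∀ V W : Set X, V ∈ NSet γ → W ∈ NSet γ →
      (∃ Z ∈ NSet γ, Z ⊆ V ∧ Z ⊆ W) → U = V ∩ W → U = V ∨ U = W

/-- for a finite DN-structure `⟨X, γ⟩` (axioms (S1)-(S3) below),
`N(X)` contains `X`, is closed under unions, and intersections of members with a
common lower bound in `N(X)` belong to `N(X)` and are greatest lower bounds
there — hence `⟨N(X), ∪, X⟩` is a distributive nearlattice; moreover
`x ↦ X \ [x)` is an order isomorphism from `X` onto `⟨Irr(N(X)), ⊆⟩`. -/
theorem DN_structure_gives_nearlattice {X : Type*} [PartialOrder X] [Fintype X]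
    (γ : Set X → Bool)
    (hS1 : γ Set.univ = true)
    (hS2 : ∀ x : X, γ (Set.Ici x)ᶜ = true)
    (hS3 : ∀ U V : Set X, IsLowerSet U → IsLowerSet V → U ⊆ V →
      γ U = true → γ V = true) :
    (Set.univ ∈ NSet γ) ∧
      (∀ U V : Set X, U ∈ NSet γ → V ∈ NSet γ → U ∪ V ∈ NSet γ) ∧
      (∀ U V : Set X, U ∈ NSet γ → V ∈ NSet γ →
        (∃ W ∈ NSet γ, W ⊆ U ∧ W ⊆ V) →
          (U ∩ V ∈ NSet γ ∧ U ∩ V ⊆ U ∧ U ∩ V ⊆ V ∧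
            ∀ W ∈ NSet γ, W ⊆ U → W ⊆ V → W ⊆ U ∩ V)) ∧
      (∀ x : X, IrrN γ (Set.Ici x)ᶜ) ∧
      (∀ U : Set X, IrrN γ U → ∃ x : X, U = (Set.Ici x)ᶜ) ∧
      (∀ x y : X, x ≤ y ↔ (Set.Ici x)ᶜ ⊆ (Set.Ici y)ᶜ) := by
  have hlow : ∀ x : X, IsLowerSet ((Set.Ici x)ᶜ) := fun x => (isUpperSet_Ici x).compl
  have hsub : ∀ (x : X) (V : Set X), IsLowerSet V → x ∉ V → V ⊆ (Set.Ici x)ᶜ := by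
    intro x V hV hx y hy hxy
    exact hx (hV hxy hy)
  refine ⟨⟨isLowerSet_univ, hS1⟩, ?_, ?_, ?_, ?_, ?_⟩
  · rintro U V ⟨hU, hγ⟩ ⟨hV, _⟩
    exact ⟨hU.union hV, hS3 U _ hU (hU.union hV) Set.subset_union_left hγ⟩
  · rintro U V ⟨hU, _⟩ ⟨hV, _⟩ ⟨W, ⟨hW, hγ⟩, h1, h2⟩
    exact ⟨⟨hU.inter hV, hS3 W _ hW (hU.inter hV) (Set.subset_inter h1 h2) hγ⟩,
      Set.inter_subset_left, Set.inter_subset_right, fun _ _ a b => Set.subset_inter a b⟩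
  · intro x
    refine ⟨⟨hlow x, hS2 x⟩, ?_, ?_⟩
    · intro h
      have hx : x ∈ (Set.Ici x)ᶜ := h ▸ Set.mem_univ x
      exact hx (le_refl x)
    · rintro V W ⟨hV, _⟩ ⟨hW, _⟩ _ h
      by_cases hx : x ∈ V
      · right
        have hxW : x ∉ W := by
          intro hw
          have hx' : x ∈ (Set.Ici x)ᶜ := h ▸ ⟨hx, hw⟩
          exact hx' (le_refl x)
        exact Set.Subset.antisymm (h ▸ Set.inter_subset_right) (hsub x W hW hxW)
      · left
        exact Set.Subset.antisymm (h ▸ Set.inter_subset_left) (hsub x V hV hx)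
  · rintro U ⟨⟨hU, hγ⟩, hne, hirr⟩
    obtain ⟨x, hx⟩ := (Set.toFinite (Uᶜ)).exists_minimal (Set.nonempty_compl.mpr hne)
    have hxU : x ∉ U := hx.prop
    have hins : IsLowerSet (insert x U) := by
      intro a b hba ha
      by_cases hb : b ∈ U
      · exact Or.inr hb
      · rcases ha with rfl | ha
        · exact Or.inl (le_antisymm hba (hx.le_of_le hb hba))
        · exact absurd (hU hba ha) hb
    have hle := hsub x U hU hxU
    refine ⟨x, ?_⟩
    rcases hirr ((Set.Ici x)ᶜ) (insert x U) ⟨hlow x, hS2 x⟩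
      ⟨hins, hS3 U _ hU hins (Set.subset_insert x U) hγ⟩
      ⟨U, ⟨hU, hγ⟩, hle, Set.subset_insert x U⟩ (by
        apply Set.Subset.antisymm
        · exact Set.subset_inter hle (Set.subset_insert x U)
        · rintro y ⟨hy, rfl | hy'⟩
          · exact absurd (le_refl y) hy
          · exact hy') with h | h
    · exact h
    · exact absurd (h ▸ Set.mem_insert x U) hxU
  · intro x y
    rw [Set.compl_subset_compl, Set.Ici_subset_Ici]
end
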